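/- Behavior of the tau-functions at a singular point (Theorem): let z₀, w₀ ∈ ℂ and let β_1,…,β_n, β̄_1,…,β̄_n ∈ ℕ be ramification indices; set σ(A) = A + β_1 + ⋯ + β_A and σ̄(A) = A + β̄_1 + ⋯ + β̄_A for A = 0,…,n. Assume each component f_A vanishes at z₀ to order at least σ(A) (i.e. (z−z₀)^{σ(A)} divides f_A in the ring of functions analytic near z₀) and each g_A vanishes at w₀ to order at least σ̄(A). Then for every 1 ≤ ℓ ≤ n+1: for each fixed w ∈ ℂ the analytic function z ↦ τ_ℓ(z,w) vanishes at z₀ to order at least ∑_{t=1}^{ℓ−1} (ℓ−t)·β_t, and for each fixed z ∈ ℂ the analytic function w ↦ τ_ℓ(z,w) vanishes at w₀ to order at least ∑_{t=1}^{ℓ−1} (ℓ−t)·β̄_t. -/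

import Mathlib

open scoped BigOperators

/-- Componentwise `i`-th iterated complex derivative of an embedding function. -/
noncomputable def Dv (n : ℕ) (f : ℂ → Fin (n + 1) → ℂ) (i : ℕ) (z : ℂ)
    (A : Fin (n + 1)) : ℂ :=
  iteratedDeriv i (fun t => f t A) z

/-- The matrix η(z,w)_{i j} = ∑_A f^{(i)}_A(z) g^{(j)}_A(w). -/
noncomputable def etaM (n : ℕ) (f g : ℂ → Fin (n + 1) → ℂ) (z w : ℂ) :
    Matrix (Fin (n + 1)) (Fin (n + 1)) ℂ :=
  Matrix.of fun i j => ∑ A, Dv n f (i : ℕ) z A * Dv n g (j : ℕ) w A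

/-- τ_ℓ(z,w): the leading ℓ×ℓ principal minor of η(z,w) (τ_0 = 1). -/
noncomputable def tauF (n : ℕ) (f g : ℂ → Fin (n + 1) → ℂ) (ℓ : ℕ) (z w : ℂ) : ℂ :=
  Matrix.det (Matrix.of fun i j : Fin ℓ => ∑ A, Dv n f (i : ℕ) z A * Dv n g (j : ℕ) w A)

/-- The A-th component of the vector ṽ_ℓ(z,w). -/
noncomputable def vtil (n : ℕ) (f g : ℂ → Fin (n + 1) → ℂ) (ℓ : ℕ) (z w : ℂ)
    (A : Fin (n + 1)) : ℂ :=
  Matrix.det (Matrix.of fun j i : Fin (ℓ + 1) =>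
    if (j : ℕ) < ℓ then ∑ B, Dv n f (i : ℕ) z B * Dv n g (j : ℕ) w B
    else Dv n f (i : ℕ) z A)

/-- The A-th component of the vector v̄_ℓ(z,w). -/
noncomputable def vbar (n : ℕ) (f g : ℂ → Fin (n + 1) → ℂ) (ℓ : ℕ) (z w : ℂ)
    (A : Fin (n + 1)) : ℂ :=
  Matrix.det (Matrix.of fun i j : Fin (ℓ + 1) =>
    if (i : ℕ) < ℓ then ∑ B, Dv n f (i : ℕ) z B * Dv n g (j : ℕ) w B
    else Dv n g (j : ℕ) w A)

/-- `F` vanishes at `z₀` to order at least `N`: `(z − z₀)^N` divides `F` in the ring of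
functions analytic near `z₀`. -/
def VanishesToOrder (F : ℂ → ℂ) (z₀ : ℂ) (N : ℕ) : Prop :=
  ∃ h : ℂ → ℂ, AnalyticAt ℂ h z₀ ∧ ∀ᶠ z in nhds z₀, F z = (z - z₀) ^ N * h z

/-!
`τ_ℓ(z, w)` is the determinant of `W_f(z) * W_g(w)ᵀ`, where `W_f(z)` is the `ℓ × (n + 1)` matrix of
derivatives of `f`. Expanding it multilinearly in the rows gives a sum over injective
`φ : Fin ℓ → Fin (n + 1)` of `∏ i, f_{φ i}^{(i)}(z)` times a factor independent of `z`. The order of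
such a product is at least `∑ i, (σ (φ i) - i)`, and since `σ` is monotone and `φ` injective, this
is at least `∑ i < ℓ, (σ i - i) = ∑ t < ℓ, (ℓ - t) * β_t`. The bound in `w` is the same
statement for the transposed determinant.
-/

open Finset Matrix

section Sums

variable {M : Type*} [AddCommMonoid M]

theorem sum_range_sum_Icc_one (β : ℕ → M) (ℓ : ℕ) :
    ∑ i ∈ range ℓ, ∑ t ∈ Icc 1 i, β t = ∑ t ∈ Icc 1 (ℓ - 1), (ℓ - t) • β t := by
  rw [sum_comm' (t' := Icc 1 (ℓ - 1)) (s' := fun t => Ico t ℓ)]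
  · simp only [sum_const, Nat.card_Ico]
  · intro i t
    simp only [mem_range, mem_Icc, mem_Ico]
    omega

variable [PartialOrder M] [IsOrderedAddMonoid M] {σ : ℕ → M}

theorem sum_range_card_le_sum_of_monotone (hσ : Monotone σ) (s : Finset ℕ) :
    ∑ i ∈ range #s, σ i ≤ ∑ a ∈ s, σ a := by
  induction s using Finset.induction_on_max with
  | empty => simp
  | insert a s hlt ih =>
    have ha : a ∉ s := fun h => lt_irrefl _ (hlt a h)
    have hcard : #s ≤ a := by
      simpa using card_le_card fun x hx => mem_range.2 (hlt x hx)
    rw [card_insert_of_notMem ha, sum_range_succ, sum_insert ha, add_comm]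
    exact add_le_add (hσ hcard) ih

theorem sum_fin_le_sum_comp_of_injective (hσ : Monotone σ) {ℓ : ℕ} {φ : Fin ℓ → ℕ}
    (hφ : Function.Injective φ) : ∑ i : Fin ℓ, σ i ≤ ∑ i, σ (φ i) := by
  simpa [Fin.sum_univ_eq_sum_range] using sum_range_card_le_sum_of_monotone hσ (univ.map ⟨φ, hφ⟩)

end Sums

theorem det_mul_eq_sum_prod_mul_det_submatrix {m p R : Type*} [Fintype m] [DecidableEq m]
    [Fintype p] [CommRing R] (A : Matrix m p R) (B : Matrix p m R) :
    (A * B).det = ∑ φ : m → p, (∏ i, A i (φ i)) * (B.submatrix φ id).det := by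
  have rows : A * B = fun i => ∑ k, A i k • B k := by
    ext i j
    simp [mul_apply]
  calc (A * B).det = detRowAlternating fun i => ∑ k, A i k • B k := by rw [rows]; rfl
    _ = ∑ φ : m → p, detRowAlternating fun i => A i (φ i) • B (φ i) :=
      detRowAlternating.toMultilinearMap.map_sum _
    _ = ∑ φ : m → p, (∏ i, A i (φ i)) * (B.submatrix φ id).det :=
      sum_congr rfl fun φ _ => detRowAlternating.toMultilinearMap.map_smul_univ _ _

section AnalyticOrder

variable {𝕜 E : Type*} [NontriviallyNormedField 𝕜] [NormedAddCommGroup E] [NormedSpace 𝕜 E]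
  {z₀ : 𝕜}

theorem le_analyticOrderAt_sum {ι : Type*} {s : Finset ι} {F : ι → 𝕜 → E} {N : ℕ∞}
    (h : ∀ i ∈ s, N ≤ analyticOrderAt (F i) z₀) : N ≤ analyticOrderAt (∑ i ∈ s, F i) z₀ := by
  refine sum_induction F (fun G => N ≤ analyticOrderAt G z₀)
    (fun _ _ hG hH => (le_min hG hH).trans le_analyticOrderAt_add) ?_ h
  have : analyticOrderAt (0 : 𝕜 → E) z₀ = ⊤ := analyticOrderAt_eq_top.2 (by simp)
  simp only [this, le_top]

theorem analyticOrderAt_prod {ι : Type*} {s : Finset ι} {F : ι → 𝕜 → 𝕜}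
    (h : ∀ i ∈ s, AnalyticAt 𝕜 (F i) z₀) :
    analyticOrderAt (∏ i ∈ s, F i) z₀ = ∑ i ∈ s, analyticOrderAt (F i) z₀ := by
  classical
  induction s using Finset.induction_on with
  | empty => simp [analyticOrderAt_eq_zero]
  | insert a s ha ih =>
    have hs : ∀ i ∈ s, AnalyticAt 𝕜 (F i) z₀ := fun i hi => h i (mem_insert_of_mem hi)
    rw [prod_insert ha, sum_insert ha,
      analyticOrderAt_mul (h a (mem_insert_self a s)) (s.analyticAt_prod hs), ih hs]

theorem analyticOrderAt_le_deriv_add_one [CharZero 𝕜] [CompleteSpace E] (F : 𝕜 → E) :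
    analyticOrderAt F z₀ ≤ analyticOrderAt (deriv F) z₀ + 1 := by
  by_cases hF : AnalyticAt 𝕜 F z₀ ∧ F z₀ = 0
  · simp [hF.1.analyticOrderAt_deriv_add_one, hF.2]
  · simp [not_not.1 (mt analyticOrderAt_ne_zero.1 hF)]

theorem analyticOrderAt_le_iteratedDeriv_add [CharZero 𝕜] [CompleteSpace E] (F : 𝕜 → E) (i : ℕ) :
    analyticOrderAt F z₀ ≤ analyticOrderAt (iteratedDeriv i F) z₀ + i := by
  induction i with
  | zero => simp
  | succ i ih =>
    calc analyticOrderAt F z₀ ≤ analyticOrderAt (iteratedDeriv i F) z₀ + i := ih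
      _ ≤ analyticOrderAt (iteratedDeriv (i + 1) F) z₀ + 1 + i := by
        rw [iteratedDeriv_succ]
        gcongr
        exact analyticOrderAt_le_deriv_add_one _
      _ = analyticOrderAt (iteratedDeriv (i + 1) F) z₀ + (i + 1 : ℕ) := by
        push_cast
        ring

end AnalyticOrder

section AnalyticMatrix

variable {𝕜 m p : Type*} [NontriviallyNormedField 𝕜] [Fintype m] [DecidableEq m] [Fintype p]
  {A : 𝕜 → Matrix m p 𝕜} {z₀ : 𝕜}

theorem analyticAt_det_mul (hA : ∀ i k, AnalyticAt 𝕜 (fun z => A z i k) z₀)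
    (C : Matrix p m 𝕜) : AnalyticAt 𝕜 (fun z => (A z * C).det) z₀ := by
  simp only [det_apply', mul_apply]
  fun_prop

theorem le_analyticOrderAt_det_mul (hA : ∀ i k, AnalyticAt 𝕜 (fun z => A z i k) z₀)
    (C : Matrix p m 𝕜) {N : ℕ∞}
    (hN : ∀ φ : m → p, Function.Injective φ → N ≤ ∑ i, analyticOrderAt (fun z => A z i (φ i)) z₀) :
    N ≤ analyticOrderAt (fun z => (A z * C).det) z₀ := by
  have expand : (fun z => (A z * C).det) =
      ∑ φ : m → p, (∏ i, fun z => A z i (φ i)) * fun _ => (C.submatrix φ id).det := by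
    ext z
    simp [det_mul_eq_sum_prod_mul_det_submatrix]
  rw [expand]
  refine le_analyticOrderAt_sum fun φ _ => ?_
  rw [analyticOrderAt_mul (analyticAt_prod _ fun i _ => hA i (φ i)) analyticAt_const,
    analyticOrderAt_prod fun i _ => hA i (φ i)]
  by_cases hφ : Function.Injective φ
  · exact (hN φ hφ).trans le_self_add
  · have hdet : (C.submatrix φ id).det = 0 :=
      detRowAlternating.map_eq_zero_of_not_injective _ fun h => hφ (.of_comp (f := C) h)
    have htop : analyticOrderAt (fun _ : 𝕜 => (C.submatrix φ id).det) z₀ = ⊤ :=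
      analyticOrderAt_eq_top.2 (.of_forall fun _ => hdet)
    simp only [htop, add_top, le_top]

end AnalyticMatrix

section Wronskian

variable {𝕜 : Type*} [NontriviallyNormedField 𝕜]

/-- The rectangular Wronskian matrix of a curve `f` in `𝕜^ι`: row `i < ℓ` is the `i`-th derivative
of `f`, taken componentwise. -/
noncomputable def wronskianMatrix {ι : Type*} (ℓ : ℕ) (f : 𝕜 → ι → 𝕜) (z : 𝕜) :
    Matrix (Fin ℓ) ι 𝕜 :=
  of fun i A => iteratedDeriv i (fun t => f t A) z

theorem analyticAt_wronskianMatrix [CompleteSpace 𝕜] {ι : Type*} {f : 𝕜 → ι → 𝕜} {z₀ : 𝕜}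
    (hf : ∀ A, AnalyticAt 𝕜 (fun z => f z A) z₀) {ℓ : ℕ} (i : Fin ℓ) (A : ι) :
    AnalyticAt 𝕜 (fun z => wronskianMatrix ℓ f z i A) z₀ := by
  simpa only [wronskianMatrix, of_apply, iteratedDeriv_eq_iterate] using (hf A).iterated_deriv i

variable [CompleteSpace 𝕜] [CharZero 𝕜] {m ℓ : ℕ} {f : 𝕜 → Fin m → 𝕜} {z₀ : 𝕜}

theorem sum_le_analyticOrderAt_det_wronskianMatrix_mul_add {σ : ℕ → ℕ} (hσ : Monotone σ)
    (hf : ∀ A, AnalyticAt 𝕜 (fun z => f z A) z₀)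
    (hord : ∀ A : Fin m, (σ A : ℕ∞) ≤ analyticOrderAt (fun z => f z A) z₀)
    (C : Matrix (Fin m) (Fin ℓ) 𝕜) :
    (∑ i : Fin ℓ, σ i : ℕ∞) ≤
      analyticOrderAt (fun z => (wronskianMatrix ℓ f z * C).det) z₀ + ∑ i : Fin ℓ, (i : ℕ∞) := by
  rw [← tsub_le_iff_right]
  refine le_analyticOrderAt_det_mul (analyticAt_wronskianMatrix hf) C fun φ hφ => ?_
  rw [tsub_le_iff_right, ← sum_add_distrib]
  calc (∑ i : Fin ℓ, σ i : ℕ∞) ≤ ∑ i, (σ (φ i) : ℕ∞) :=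
        sum_fin_le_sum_comp_of_injective (Nat.mono_cast.comp hσ) (Fin.val_injective.comp hφ)
    _ ≤ ∑ i, (analyticOrderAt (fun z => wronskianMatrix ℓ f z i (φ i)) z₀ + (i : ℕ∞)) :=
        sum_le_sum fun i _ => (hord (φ i)).trans (analyticOrderAt_le_iteratedDeriv_add _ i)

theorem stmt12_general {β : ℕ → ℕ}
    (hf : ∀ A : Fin m, AnalyticAt 𝕜 (fun z => f z A) z₀ ∧
      ((A + ∑ t ∈ Icc 1 (A : ℕ), β t : ℕ) : ℕ∞) ≤ analyticOrderAt (fun z => f z A) z₀)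
    (C : Matrix (Fin m) (Fin ℓ) 𝕜) :
    AnalyticAt 𝕜 (fun z => (wronskianMatrix ℓ f z * C).det) z₀ ∧
      ((∑ t ∈ Icc 1 (ℓ - 1), (ℓ - t) * β t : ℕ) : ℕ∞) ≤
        analyticOrderAt (fun z => (wronskianMatrix ℓ f z * C).det) z₀ := by
  obtain ⟨han, hord⟩ := forall_and.1 hf
  refine ⟨analyticAt_det_mul (analyticAt_wronskianMatrix han) C, ?_⟩
  have hσ : Monotone fun a => a + ∑ t ∈ Icc 1 a, β t := fun a b hab =>
    add_le_add hab (sum_le_sum_of_subset (Icc_subset_Icc_right hab))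
  have hsum : ∑ i : Fin ℓ, ((i : ℕ) + ∑ t ∈ Icc 1 (i : ℕ), β t) =
      ∑ t ∈ Icc 1 (ℓ - 1), (ℓ - t) * β t + ∑ i : Fin ℓ, (i : ℕ) := by
    rw [sum_add_distrib, Fin.sum_univ_eq_sum_range (fun i => ∑ t ∈ Icc 1 i, β t),
      sum_range_sum_Icc_one, add_comm]
    simp only [smul_eq_mul]
  have h := sum_le_analyticOrderAt_det_wronskianMatrix_mul_add hσ han hord C
  rw [← Nat.cast_sum, ← Nat.cast_sum, hsum, Nat.cast_add] at h
  exact (ENat.add_le_add_iff_right (ENat.natCast_ne_top _)).1 h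

end Wronskian

theorem vanishesToOrder_iff {F : ℂ → ℂ} {z₀ : ℂ} {N : ℕ} :
    VanishesToOrder F z₀ N ↔ AnalyticAt ℂ F z₀ ∧ N ≤ analyticOrderAt F z₀ := by
  constructor
  · rintro ⟨h, hh, hF⟩
    have hF' : AnalyticAt ℂ F z₀ :=
      AnalyticAt.congr (f := fun z => (z - z₀) ^ N * h z) (by fun_prop) (hF.mono fun _ => Eq.symm)
    exact ⟨hF', (natCast_le_analyticOrderAt hF').2 ⟨h, hh, hF⟩⟩
  · rintro ⟨hF, hN⟩
    exact (natCast_le_analyticOrderAt hF).1 hN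

theorem tauF_eq_det_mul_transpose (n : ℕ) (f g : ℂ → Fin (n + 1) → ℂ) (ℓ : ℕ) (z w : ℂ) :
    tauF n f g ℓ z w = (wronskianMatrix ℓ f z * (wronskianMatrix ℓ g w)ᵀ).det :=
  rfl

theorem tauF_swap (n : ℕ) (f g : ℂ → Fin (n + 1) → ℂ) (ℓ : ℕ) (z w : ℂ) :
    tauF n f g ℓ z w = tauF n g f ℓ w z := by
  rw [tauF_eq_det_mul_transpose, ← det_transpose, transpose_mul, transpose_transpose,
    tauF_eq_det_mul_transpose]

/-- behavior of the tau-functions at a singular point: if f_A vanishes at z₀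
to order ≥ σ(A) = A + β_1 + ⋯ + β_A and g_A vanishes at w₀ to order ≥ σ̄(A), then for
1 ≤ ℓ ≤ n+1, τ_ℓ(·,w) vanishes at z₀ to order ≥ ∑_{t=1}^{ℓ−1}(ℓ−t)β_t and τ_ℓ(z,·)
vanishes at w₀ to order ≥ ∑_{t=1}^{ℓ−1}(ℓ−t)β̄_t. -/
theorem stmt12 (n : ℕ) (f g : ℂ → Fin (n + 1) → ℂ)
    (hf : ∀ A, Differentiable ℂ fun z => f z A)
    (hg : ∀ A, Differentiable ℂ fun z => g z A)
    (z₀ w₀ : ℂ) (β βbar : ℕ → ℕ)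
    (hvf : ∀ A : Fin (n + 1), VanishesToOrder (fun z => f z A) z₀
      ((A : ℕ) + ∑ t ∈ Finset.Icc 1 (A : ℕ), β t))
    (hvg : ∀ A : Fin (n + 1), VanishesToOrder (fun w => g w A) w₀
      ((A : ℕ) + ∑ t ∈ Finset.Icc 1 (A : ℕ), βbar t)) :
    ∀ ℓ : ℕ, 1 ≤ ℓ → ℓ ≤ n + 1 →
      (∀ w : ℂ, VanishesToOrder (fun z => tauF n f g ℓ z w) z₀
        (∑ t ∈ Finset.Icc 1 (ℓ - 1), (ℓ - t) * β t)) ∧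
      (∀ z : ℂ, VanishesToOrder (fun w => tauF n f g ℓ z w) w₀
        (∑ t ∈ Finset.Icc 1 (ℓ - 1), (ℓ - t) * βbar t)) := by
  simp only [vanishesToOrder_iff] at hvf hvg ⊢
  exact fun ℓ _ _ => ⟨fun w => stmt12_general hvf _,
    fun z => by simpa only [tauF_swap n f g] using! stmt12_general hvg _⟩
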